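/- Let κ > -1 and ρ > -1 be real, let m ≥ 1 be an integer and n a nonnegative integer. Then for every z ∈ ℂ with z ≠ 0 and every w ∈ ℂ, the annihilation relation holds: z · D[u ↦ Z^{κ,ρ}_{m,n}(u,w)](z) - (n-m)·Z^{κ,ρ}_{m,n}(z,w) = m(n+ρ+κ+1)·w·Z^{κ+1,ρ}_{m-1,n}(z,w), where D denotes the complex derivative in u with w held fixed. -/

import Mathlib

open Complex Finset

/-- The fractional Zernike function `Z^{κ,ρ}_{m,n}(z,w)`, viewed as a function of two
independent complex variables. -/
noncomputable def fracZernike (κ ρ : ℝ) (m n : ℕ) (z w : ℂ) : ℂ :=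
  ∑ j ∈ Finset.range (m + 1),
    ((-1 : ℂ) ^ j * (Nat.factorial m : ℂ) * Complex.Gamma ((n : ℂ) + ρ + 1) *
        Complex.Gamma ((κ : ℂ) + m + 1) /
      ((Nat.factorial j : ℂ) * (Nat.factorial (m - j) : ℂ) *
        Complex.Gamma ((n : ℂ) + ρ - j + 1) * Complex.Gamma ((κ : ℂ) + j + 1))) *
    (1 - z * w) ^ j * z ^ ((n : ℤ) - (j : ℤ)) * w ^ (m - j)


/-- The coefficient of the `j`-th term. -/
noncomputable def fzCoeff (κ ρ : ℝ) (m n j : ℕ) : ℂ :=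
  ((-1 : ℂ) ^ j * (Nat.factorial m : ℂ) * Complex.Gamma ((n : ℂ) + ρ + 1) *
        Complex.Gamma ((κ : ℂ) + m + 1) /
      ((Nat.factorial j : ℂ) * (Nat.factorial (m - j) : ℂ) *
        Complex.Gamma ((n : ℂ) + ρ - j + 1) * Complex.Gamma ((κ : ℂ) + j + 1)))

lemma fzCoeff_rec (κ ρ : ℝ) (k n j : ℕ) (hj : j ≤ k) :
    ((k : ℂ) + 1 - j) * fzCoeff κ ρ (k + 1) n j - (j + 1) * fzCoeff κ ρ (k + 1) n (j + 1)
      = ((k : ℂ) + 1) * ((n : ℂ) + ρ + κ + 1) * fzCoeff (κ + 1) ρ k n j := by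
  obtain ⟨l, rfl⟩ := Nat.exists_eq_add_of_le hj
  unfold fzCoeff
  have e1 : j + l + 1 - j = l + 1 := by omega
  have e2 : j + l + 1 - (j + 1) = l := by omega
  have e3 : j + l - j = l := by omega
  rw [e1, e2, e3]
  have h1 := Complex.one_div_Gamma_eq_self_mul_one_div_Gamma_add_one ((n : ℂ) + ρ - j)
  have h2 := Complex.one_div_Gamma_eq_self_mul_one_div_Gamma_add_one ((κ : ℂ) + j + 1)
  have a1 : (n : ℂ) + ρ - ((j + 1 : ℕ) : ℂ) + 1 = (n : ℂ) + ρ - j := by push_cast; ring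
  have a2 : (κ : ℂ) + ((j + 1 : ℕ) : ℂ) + 1 = (κ : ℂ) + j + 1 + 1 := by push_cast; ring
  have a3 : ((κ + 1 : ℝ) : ℂ) + (j : ℂ) + 1 = (κ : ℂ) + j + 1 + 1 := by push_cast; ring
  have a4 : ((κ + 1 : ℝ) : ℂ) + ((j + l : ℕ) : ℂ) + 1
      = (κ : ℂ) + ((j + l + 1 : ℕ) : ℂ) + 1 := by push_cast; ring
  rw [a1, a2, a3, a4]
  simp only [div_eq_mul_inv, mul_inv, one_mul] at h1 h2 ⊢
  rw [h1, h2, Nat.factorial_succ (j + l), Nat.factorial_succ j, Nat.factorial_succ l]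
  generalize (Complex.Gamma ((n : ℂ) + ρ - j + 1))⁻¹ = X
  generalize (Complex.Gamma ((κ : ℂ) + j + 1 + 1))⁻¹ = Y
  generalize Complex.Gamma _ = P
  generalize Complex.Gamma _ = Q
  have f1 : (j.factorial : ℂ) ≠ 0 := by exact_mod_cast j.factorial_ne_zero
  have f2 : (l.factorial : ℂ) ≠ 0 := by exact_mod_cast l.factorial_ne_zero
  have f3 : (j : ℂ) + 1 ≠ 0 := by exact_mod_cast j.succ_ne_zero
  have f4 : (l : ℂ) + 1 ≠ 0 := by exact_mod_cast l.succ_ne_zero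
  push_cast
  field_simp
  ring

lemma fracZernike_eq (κ ρ : ℝ) (m n : ℕ) (z w : ℂ) :
    fracZernike κ ρ m n z w = ∑ j ∈ Finset.range (m + 1),
      fzCoeff κ ρ m n j * (1 - z * w) ^ j * z ^ ((n : ℤ) - (j : ℤ)) * w ^ (m - j) := rfl

lemma fz_term (c : ℂ) (m n j : ℕ) (z : ℂ) (hz : z ≠ 0) (w : ℂ) :
    HasDerivAt (fun u : ℂ => c * (1 - u * w) ^ j * u ^ ((n : ℤ) - (j : ℤ)) * w ^ (m - j))
      (c * (j * (1 - z * w) ^ (j - 1) * (-w)) * z ^ ((n : ℤ) - (j : ℤ)) * w ^ (m - j)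
        + c * (1 - z * w) ^ j * (((n : ℂ) - j) * (z ^ ((n : ℤ) - (j : ℤ)) / z)) * w ^ (m - j))
      z := by
  have h1 : HasDerivAt (fun u : ℂ => 1 - u * w) (-w) z := by
    simpa using ((hasDerivAt_id z).mul_const w).const_sub 1
  have h2 := hasDerivAt_zpow ((n : ℤ) - (j : ℤ)) z (Or.inl hz)
  have h3 := (((h1.fun_pow j).const_mul c).fun_mul h2).mul_const (w ^ (m - j))
  refine h3.congr_deriv ?_
  rw [zpow_sub_one₀ hz]
  push_cast
  ring

/-- The annihilation relation: the operator `(1/(m(n+ρ+κ+1) z̄))(z ∂/∂z - (n-m))` maps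
`Z^{κ,ρ}_{m,n}` to `Z^{κ+1,ρ}_{m-1,n}`. -/
theorem fracZernike_annihilation (κ ρ : ℝ) (hκ : -1 < κ) (hρ : -1 < ρ) (m n : ℕ)
    (hm : 1 ≤ m) (z : ℂ) (hz : z ≠ 0) (w : ℂ) :
    z * deriv (fun u => fracZernike κ ρ m n u w) z
        - ((n : ℂ) - m) * fracZernike κ ρ m n z w
      = (m : ℂ) * ((n : ℂ) + ρ + κ + 1) * w * fracZernike (κ + 1) ρ (m - 1) n z w := by
  obtain ⟨k, rfl⟩ : ∃ k, m = k + 1 := ⟨m - 1, by omega⟩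
  have hd : HasDerivAt (fun u => fracZernike κ ρ (k + 1) n u w) _ z :=
    HasDerivAt.fun_sum (u := Finset.range (k + 1 + 1))
      (fun j _ => fz_term (fzCoeff κ ρ (k + 1) n j) (k + 1) n j z hz w)
  rw [hd.deriv, fracZernike_eq, fracZernike_eq, Nat.add_sub_cancel, Finset.mul_sum,
    Finset.mul_sum, Finset.mul_sum, ← Finset.sum_sub_distrib]
  have key : ∀ j ∈ Finset.range (k + 1 + 1),
      z * (fzCoeff κ ρ (k + 1) n j * (j * (1 - z * w) ^ (j - 1) * (-w))
          * z ^ ((n : ℤ) - (j : ℤ)) * w ^ (k + 1 - j)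
        + fzCoeff κ ρ (k + 1) n j * (1 - z * w) ^ j
          * (((n : ℂ) - j) * (z ^ ((n : ℤ) - (j : ℤ)) / z)) * w ^ (k + 1 - j))
      - ((n : ℂ) - ((k + 1 : ℕ) : ℂ)) * (fzCoeff κ ρ (k + 1) n j * (1 - z * w) ^ j
          * z ^ ((n : ℤ) - (j : ℤ)) * w ^ (k + 1 - j))
      = ((k : ℂ) + 1 - j) * fzCoeff κ ρ (k + 1) n j * (1 - z * w) ^ j
          * z ^ ((n : ℤ) - (j : ℤ)) * w ^ (k + 1 - j)
        - j * fzCoeff κ ρ (k + 1) n j * (1 - z * w) ^ (j - 1)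
          * (z * z ^ ((n : ℤ) - (j : ℤ))) * (w * w ^ (k + 1 - j)) := by
    intro j _
    push_cast
    field_simp
    ring
  rw [Finset.sum_congr rfl key, Finset.sum_sub_distrib, Finset.sum_range_succ,
    Finset.sum_range_succ' _ (k + 1)]
  push_cast
  simp only [sub_self, zero_mul, add_zero]
  rw [← Finset.sum_sub_distrib]
  refine Finset.sum_congr rfl fun j hj => ?_
  have hj' : j ≤ k := by simpa [Nat.lt_succ_iff] using hj
  have r := fzCoeff_rec κ ρ k n j hj'
  have z1 : z * z ^ ((n : ℤ) - ((j : ℤ) + 1)) = z ^ ((n : ℤ) - (j : ℤ)) := by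
    rw [← zpow_one_add₀ hz]; congr 1; ring
  have w2 : w ^ (k + 1 - j) = w * w ^ (k - j) := by
    rw [← pow_succ']; congr 1; omega
  rw [z1, w2]
  linear_combination (1 - z * w) ^ j * z ^ ((n : ℤ) - (j : ℤ)) * w * w ^ (k - j) * r
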